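/- For n ∈ {6,7,8}, let E_n denote the tree on n vertices obtained from a path on n−1 vertices by attaching one extra leaf to the third vertex of the path (the Dynkin diagram of type E_n). Then for all integers k, m: dim SH^k(E_n, m) = 1 if k = m and 0 ≤ k ≤ n; dim SH^k(E_n, m) = (1 if 1 ≤ k ≤ n−4) + (1 if 2 ≤ k ≤ n−3) if m = k+1; and dim SH^k(E_n, m) = 0 otherwise. Equivalently, P_{E_n}(q,t) = P_{A_n}(q,t) + qt²(1+qt)·P_{A_{n−5}}(q,t). -/

import Mathlib

open Polynomial Matrix

attribute [local instance] Classical.propDecidable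

namespace Seifert

variable {V : Type} [Fintype V]

/-- A matching of a graph `G`: a finite set of edges of `G` that are pairwise disjoint. -/
def IsMatching (G : SimpleGraph V) (R : Finset (Sym2 V)) : Prop :=
  (∀ e ∈ R, e ∈ G.edgeSet) ∧
    ∀ e ∈ R, ∀ f ∈ R, e ≠ f → ∀ v : V, v ∈ e → v ∉ f

/-- A perfect matching: a matching covering every vertex. -/
def IsPerfectMatching (G : SimpleGraph V) (R : Finset (Sym2 V)) : Prop :=
  IsMatching G R ∧ ∀ v : V, ∃ e ∈ R, v ∈ e

/-- A configuration on `G`: a matching (the set of red edges) together with an assignment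
of a sign (`true` = plus, `false` = minus) to every vertex not covered by a red edge;
vertices covered by a red edge get `none`. -/
structure Config (G : SimpleGraph V) where
  red : Finset (Sym2 V)
  matching : IsMatching G red
  sign : V → Option Bool
  sign_none : ∀ v : V, sign v = none ↔ ∃ e ∈ red, v ∈ e

instance (G : SimpleGraph V) : Finite (Config G) :=
  Finite.of_injective (fun C => (C.red, C.sign)) (by
    rintro ⟨r, hr, s, hs⟩ ⟨r', hr', s', hs'⟩ h
    simp only [Prod.mk.injEq] at h
    obtain ⟨h1, h2⟩ := h
    subst h1; subst h2; rfl)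

noncomputable instance (G : SimpleGraph V) : Fintype (Config G) := Fintype.ofFinite _

/-- The grading `Q`: the number of minuses. -/
noncomputable def Qg {G : SimpleGraph V} (C : Config G) : ℕ :=
  (Finset.univ.filter fun v : V => C.sign v = some false).card

/-- The grading `E`: the number of minuses plus the number of red edges. -/
noncomputable def Eg {G : SimpleGraph V} (C : Config G) : ℕ := Qg C + C.red.card

/-- `DStep C C'` holds iff `C'` is one of the summands of `D(C)`: it is obtained from `C`
by deleting one red edge `e` and assigning a plus to one endpoint of `e` and a minus to
the other. -/
def DStep {G : SimpleGraph V} (C C' : Config G) : Prop :=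
  ∃ e ∈ C.red, C'.red = C.red.erase e ∧
    (∀ x : V, x ∉ e → C'.sign x = C.sign x) ∧
    ∃ u v : V, e = s(u, v) ∧ C'.sign u = some true ∧ C'.sign v = some false

/-- `dStep C C'` holds iff `C'` is one of the summands of `d(C)`: it is obtained from `C`
by changing the sign of one vertex from plus to minus. -/
def dStep {G : SimpleGraph V} (C C' : Config G) : Prop :=
  C'.red = C.red ∧ ∃ w : V, C.sign w = some true ∧ C'.sign w = some false ∧
    ∀ x : V, x ≠ w → C'.sign x = C.sign x

/-- The linear map on spaces of `F₂`-valued functions induced by a relation `r`: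
the basis vector of `a` is sent to the sum of the basis vectors of all `b` with `r a b`. -/
noncomputable def sumLin {α β : Type} [Fintype α] (r : α → β → Prop) :
    (α → ZMod 2) →ₗ[ZMod 2] (β → ZMod 2) where
  toFun f b := ∑ a : α, if r a b then f a else 0
  map_add' f g := by
    funext b
    simp only [Pi.add_apply]
    rw [← Finset.sum_add_distrib]
    exact Finset.sum_congr rfl fun a _ => by by_cases h : r a b <;> simp [h]
  map_smul' c f := by
    funext b
    simp only [RingHom.id_apply, Pi.smul_apply, smul_eq_mul, Finset.mul_sum]
    exact Finset.sum_congr rfl fun a _ => by by_cases h : r a b <;> simp [h]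

/-- The differential `D` on the total Seifert complex `SC(T)`. -/
noncomputable def Dmap (G : SimpleGraph V) :
    (Config G → ZMod 2) →ₗ[ZMod 2] (Config G → ZMod 2) :=
  sumLin DStep

/-- The differential `d` on the total Seifert complex `SC(T)`. -/
noncomputable def dmap (G : SimpleGraph V) :
    (Config G → ZMod 2) →ₗ[ZMod 2] (Config G → ZMod 2) :=
  sumLin dStep

/-- The graded piece `SC^k(T,n)`: the `F₂`-vector space with basis the configurations
with `Q = k` and `E = n`. -/
abbrev SC (G : SimpleGraph V) (k n : ℤ) : Type :=
  {C : Config G // (Qg C : ℤ) = k ∧ (Eg C : ℤ) = n} → ZMod 2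

/-- The differential `D` between graded pieces. (Mathematically it is nonzero only
from `SC^k(T,n)` to `SC^{k+1}(T,n)`.) -/
noncomputable def Dgr (G : SimpleGraph V) (k n k' n' : ℤ) :
    SC G k n →ₗ[ZMod 2] SC G k' n' :=
  sumLin fun C C' => DStep C.1 C'.1

/-- The dimension of the cohomology `ker g / im f` at the middle term of `A —f→ B —g→ C`
(taking the image of `f` intersected with the kernel of `g`). -/
noncomputable def cohDim {A B M : Type} [AddCommGroup A] [AddCommGroup B] [AddCommGroup M]
    [Module (ZMod 2) A] [Module (ZMod 2) B] [Module (ZMod 2) M]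
    (f : A →ₗ[ZMod 2] B) (g : B →ₗ[ZMod 2] M) : ℕ :=
  Module.finrank (ZMod 2)
    (LinearMap.ker g ⧸ (LinearMap.range f).comap (LinearMap.ker g).subtype)

/-- The dimension of the Seifert cohomology `SH^k(T,n)`. -/
noncomputable def SHdim (G : SimpleGraph V) (k n : ℤ) : ℕ :=
  cohDim (Dgr G (k - 1) n k n) (Dgr G k n (k + 1) n)

/-- The Seifert matrix of a graph with respect to an enumeration of its vertices. -/
noncomputable def seifertMatrix (G : SimpleGraph V) {m : ℕ} (e : V ≃ Fin m) :
    Matrix (Fin m) (Fin m) ℤ := fun i j =>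
  if i = j then -1 else if i < j ∧ G.Adj (e.symm i) (e.symm j) then 1 else 0

/-- The Alexander polynomial `det (t S - Sᵀ)` of a graph with respect to an enumeration
of its vertices. -/
noncomputable def alexDet (G : SimpleGraph V) {m : ℕ} (e : V ≃ Fin m) : Polynomial ℤ :=
  let S : Matrix (Fin m) (Fin m) (Polynomial ℤ) :=
    (seifertMatrix G e).map fun a => (Polynomial.C a : Polynomial ℤ)
  ((X : Polynomial ℤ) • S - Sᵀ).det

/-- The Alexander polynomial of a graph (or forest), defined as the matching polynomial
`Σ_R t^{|R|} (1-t)^{V - 2|R|}`, the sum being over all matchings `R`. -/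
noncomputable def alexMatch (G : SimpleGraph V) : Polynomial ℤ :=
  ∑ R : {R : Finset (Sym2 V) // IsMatching G R},
    X ^ R.1.card * (1 - X) ^ (Fintype.card V - 2 * R.1.card)


/-- The Dynkin diagram `E_n`: a path on the `n - 1` vertices `1, …, n-1` together with an
extra leaf `0` attached to the third vertex `3` of the path. -/
def dynkinE (n : ℕ) : SimpleGraph (Fin n) :=
  SimpleGraph.fromRel fun i j =>
    ((i : ℕ) = 0 ∧ (j : ℕ) = 3) ∨ (1 ≤ (i : ℕ) ∧ (j : ℕ) = (i : ℕ) + 1)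

/-! ### A computable model -/

/-- Lower endpoint of the `i`-th edge. -/
def lo (i : ℕ) : ℕ := i
/-- Upper endpoint of the `i`-th edge. -/
def hi (i : ℕ) : ℕ := cond (Nat.beq i 0) 3 (i + 1)

/-- The edges in the mask `a` are pairwise disjoint. -/
def adjOK (p a : ℕ) : Bool :=
  (List.range p).all fun i => !a.testBit i || (List.range p).all fun j =>
    Nat.beq i j || !a.testBit j ||
      !(Nat.beq (lo i) (lo j) || Nat.beq (lo i) (hi j) ||
        Nat.beq (hi i) (lo j) || Nat.beq (hi i) (hi j))

/-- The minuses in the mask `b` are not on the edges in the mask `a`. -/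
def okAB (p a b : ℕ) : Bool :=
  (List.range p).all fun i => !a.testBit i || (!b.testBit (lo i) && !b.testBit (hi i))

/-- The list of all codes of configurations. -/
def codes (n p : ℕ) : List (ℕ × ℕ) :=
  ((List.range (2 ^ p)).filter (adjOK p)).flatMap fun a =>
    ((List.range (2 ^ n)).filter (okAB p a)).map fun b => (a, b)

/-- Number of ones among the first `n` bits. -/
def pop (n x : ℕ) : ℕ := (List.range n).countP x.testBit

/-- The relation `DStep` on codes. -/
def cstep (p : ℕ) (c c' : ℕ × ℕ) : Bool :=
  Nat.beq (Nat.land c.1 c'.1) c'.1 && (Nat.beq (Nat.land c.2 c'.2) c.2 &&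
    (List.range p).any fun i => c.1.testBit i && (Nat.beq c'.1 (c.1 ^^^ 2 ^ i) &&
      (Nat.beq c'.2 (c.2 ^^^ 2 ^ lo i) || Nat.beq c'.2 (c.2 ^^^ 2 ^ hi i))))

/-- The bit vector of a row of a matrix given by a relation. -/
def rowOf (s : ℕ × ℕ → Bool) : List (ℕ × ℕ) → ℕ
  | [] => 0
  | c' :: L => 2 * rowOf s L + (s c').toNat

/-- Rank of a list of bit vectors by elimination (first argument: fuel). -/
def rk : ℕ → List ℕ → ℕ
  | 0, _ => 0
  | _ + 1, [] => 0
  | f + 1, v :: vs => cond (Nat.beq v 0) (rk f vs)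
      (rk f (vs.map fun w => cond (w.testBit v.log2) (w ^^^ v) w) + 1)

/-- The part of a list of codes with `Q + s = q` and `E = m`. -/
def part (n p : ℕ) (l : List (ℕ × ℕ)) (s q m : ℕ) : List (ℕ × ℕ) :=
  (l.filter fun c => Nat.beq (pop n c.2 + pop p c.1) m).filter fun c => Nat.beq (pop n c.2 + s) q

/-- `D ∘ D` at one code. -/
def dd (p : ℕ) (B C : List (ℕ × ℕ)) (c : ℕ × ℕ) : ℕ :=
  B.foldr (fun b acc => cond (cstep p c b) (rowOf (cstep p b) C ^^^ acc) acc) 0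

/-- The expected dimension. -/
def expect (n q m : ℕ) : ℕ :=
  (Nat.beq q m && Nat.ble q n).toNat +
    (Nat.beq m (q + 1) && (Nat.ble 1 q && Nat.ble (q + 4) n)).toNat +
    (Nat.beq m (q + 1) && (Nat.ble 2 q && Nat.ble (q + 3) n)).toNat

/-- The check of the three lists of codes. -/
def chk3 (p x : ℕ) (A B C : List (ℕ × ℕ)) : Bool :=
  A.all (fun c => Nat.beq (dd p B C c) 0) &&
    Nat.beq B.length (rk A.length (A.map fun c => rowOf (cstep p c) B) +
      rk B.length (B.map fun c => rowOf (cstep p c) C) + x)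

/-- The check of all bidegrees. -/
def chkAll (n p : ℕ) : Bool :=
  (List.range (n + 1)).all fun m => (List.range (m + 1)).all fun q =>
    chk3 p (expect n q m) (part n p (codes n p) 1 q m) (part n p (codes n p) 0 q m)
      (part n p (codes n p) 0 (q + 1) m)

/-- All codes have degree at most `n`. -/
def chkDeg (n p : ℕ) : Bool :=
  (codes n p).all fun c => Nat.ble (pop n c.2 + pop p c.1) n

/-! ### Linear algebra -/

theorem cohDim_add {A B M : Type} [AddCommGroup A] [AddCommGroup B] [AddCommGroup M]
    [Module (ZMod 2) A] [Module (ZMod 2) B] [Module (ZMod 2) M]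
    [FiniteDimensional (ZMod 2) B]
    (f : A →ₗ[ZMod 2] B) (g : B →ₗ[ZMod 2] M) (h : LinearMap.range f ≤ LinearMap.ker g) :
    cohDim f g + Module.finrank (ZMod 2) (LinearMap.range f) +
      Module.finrank (ZMod 2) (LinearMap.range g) = Module.finrank (ZMod 2) B := by
  have h1 := Submodule.finrank_quotient_add_finrank
    ((LinearMap.range f).comap (LinearMap.ker g).subtype)
  have h2 := (Submodule.comapSubtypeEquivOfLe h).finrank_eq
  have h3 := LinearMap.finrank_range_add_finrank_ker g
  unfold cohDim
  omega

/-- The vector over `F₂` of a bit vector. -/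
def bv {β : Type} (idx : β → ℕ) (w : ℕ) : β → ZMod 2 := fun b => cond (w.testBit (idx b)) 1 0

theorem bv_xor {β : Type} (idx : β → ℕ) (v w : ℕ) : bv idx (v ^^^ w) = bv idx v + bv idx w := by
  funext b
  simp only [bv, Nat.testBit_xor, Pi.add_apply]
  cases v.testBit (idx b) <;> cases w.testBit (idx b) <;> decide +kernel

theorem bv_zero {β : Type} (idx : β → ℕ) : bv idx 0 = 0 := by
  funext b
  simp [bv]

theorem rk_spec {β : Type} [Finite β] (idx : β → ℕ) (N : ℕ) (hidx : ∀ j < N, ∃ b, idx b = j) :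
    ∀ (f : ℕ) (l : List ℕ), l.length ≤ f → (∀ w ∈ l, w < 2 ^ N) →
      Module.finrank (ZMod 2) (Submodule.span (ZMod 2) (Set.image (bv idx) {w | w ∈ l})) = rk f l := by
  intro f
  induction f with
  | zero =>
    intro l hl _
    have : l = [] := List.length_eq_zero_iff.mp (by omega)
    subst this
    simp [rk]
  | succ f ih =>
    intro l hl hN
    cases l with
    | nil => simp [rk]
    | cons v vs =>
      simp only [List.length_cons] at hl
      by_cases hv : v = 0
      · subst hv
        have : rk (f + 1) (0 :: vs) = rk f vs := by simp [rk]
        rw [this, ← ih vs (by omega) (fun w hw => hN w (by simp [hw]))]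
        have hs : {w | w ∈ (0 : ℕ) :: vs} = insert 0 {w | w ∈ vs} := by
          ext w; simp
        rw [hs, Set.image_insert_eq, bv_zero, Submodule.span_insert_zero]
      · have hb : Nat.beq v 0 = false := by
          cases v with
          | zero => exact absurd rfl hv
          | succ v => rfl
        have hvN : v < 2 ^ N := hN v (by simp)
        set red : ℕ → ℕ := fun w => cond (w.testBit v.log2) (w ^^^ v) w with hred
        have hrk : rk (f + 1) (v :: vs) = rk f (vs.map red) + 1 := by
          simp only [rk, hb, cond_false, hred]
        have hredN : ∀ w ∈ vs.map red, w < 2 ^ N := by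
          intro w hw
          obtain ⟨u, hu, rfl⟩ := List.mem_map.mp hw
          have huN : u < 2 ^ N := hN u (by simp [hu])
          simp only [hred]
          cases u.testBit v.log2
          · exact huN
          · exact Nat.xor_lt_two_pow huN hvN
        rw [hrk, ← ih (vs.map red) (by simp; omega) hredN]
        have hpN : v.log2 < N := (Nat.log2_lt hv).mpr hvN
        obtain ⟨b, hbp⟩ := hidx _ hpN
        have hvb : bv idx v b = 1 := by
          simp [bv, hbp, Nat.testBit_log2 hv]
        set S' := Submodule.span (ZMod 2) (Set.image (bv idx) {w | w ∈ vs.map red}) with hS'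
        have hSker : S' ≤ LinearMap.ker (LinearMap.proj (R := ZMod 2) (φ := fun _ : β => ZMod 2) b) := by
          rw [hS', Submodule.span_le]
          rintro _ ⟨w, hw, rfl⟩
          obtain ⟨u, hu, rfl⟩ := List.mem_map.mp hw
          simp only [SetLike.mem_coe, LinearMap.mem_ker, LinearMap.proj_apply, hred, bv, hbp]
          cases hc : u.testBit v.log2
          · simp [hc]
          · simp [hc, Nat.testBit_xor, Nat.testBit_log2 hv]
        have hSeq : Submodule.span (ZMod 2) (Set.image (bv idx) {w | w ∈ v :: vs}) =
            Submodule.span (ZMod 2) {bv idx v} ⊔ S' := by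
          have key : ∀ u, bv idx (red u) = bv idx u ∨ bv idx (red u) = bv idx u + bv idx v := by
            intro u
            simp only [hred]
            cases u.testBit v.log2
            · left; rfl
            · right; exact bv_xor idx u v
          apply le_antisymm
          · rw [Submodule.span_le]
            rintro _ ⟨w, hw, rfl⟩
            have hvin : bv idx v ∈ Submodule.span (ZMod 2) {bv idx v} ⊔ S' :=
              Submodule.mem_sup_left (Submodule.mem_span_singleton_self _)
            rcases List.mem_cons.mp hw with rfl | hw
            · exact hvin
            · have hin : bv idx (red w) ∈ Submodule.span (ZMod 2) {bv idx v} ⊔ S' :=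
                Submodule.mem_sup_right (Submodule.subset_span ⟨_, List.mem_map_of_mem hw, rfl⟩)
              rcases key w with h | h
              · rw [h] at hin; exact hin
              · have := Submodule.sub_mem _ hin hvin
                rw [h, add_sub_cancel_right] at this
                exact this
          · apply sup_le
            · rw [Submodule.span_le, Set.singleton_subset_iff]
              exact Submodule.subset_span ⟨v, by simp, rfl⟩
            · rw [hS', Submodule.span_le]
              rintro _ ⟨w, hw, rfl⟩
              obtain ⟨u, hu, rfl⟩ := List.mem_map.mp hw
              have h1 : bv idx u ∈ Submodule.span (ZMod 2) (Set.image (bv idx) {w | w ∈ v :: vs}) :=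
                Submodule.subset_span ⟨u, by simp [hu], rfl⟩
              have h2 : bv idx v ∈ Submodule.span (ZMod 2) (Set.image (bv idx) {w | w ∈ v :: vs}) :=
                Submodule.subset_span ⟨v, by simp, rfl⟩
              rcases key u with h | h
              · rw [SetLike.mem_coe, h]; exact h1
              · rw [SetLike.mem_coe, h]; exact Submodule.add_mem _ h1 h2
        have hne : bv idx v ≠ 0 := by
          intro h
          rw [h] at hvb
          exact zero_ne_one hvb
        have hinf : Submodule.span (ZMod 2) {bv idx v} ⊓ S' = ⊥ := by
          rw [Submodule.eq_bot_iff]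
          rintro x ⟨hx1, hx2⟩
          obtain ⟨c, rfl⟩ := Submodule.mem_span_singleton.mp hx1
          have := hSker hx2
          simp only [LinearMap.mem_ker, LinearMap.proj_apply, Pi.smul_apply, hvb, smul_eq_mul,
            mul_one] at this
          rw [this, zero_smul]
        have hdim := Submodule.finrank_sup_add_finrank_inf_eq
          (Submodule.span (ZMod 2) {bv idx v}) S'
        rw [hinf, finrank_bot, finrank_span_singleton hne] at hdim
        rw [hSeq]
        omega

theorem rowOf_lt (s : ℕ × ℕ → Bool) : ∀ L : List (ℕ × ℕ), rowOf s L < 2 ^ L.length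
  | [] => by simp [rowOf]
  | c :: L => by
    have := rowOf_lt s L
    have h2 : (s c).toNat ≤ 1 := Bool.toNat_le _
    simp only [rowOf, List.length_cons, pow_succ]
    omega

theorem rowOf_testBit (s : ℕ × ℕ → Bool) :
    ∀ (L : List (ℕ × ℕ)) (j : ℕ) (h : j < L.length), (rowOf s L).testBit j = s L[j]
  | [], j, h => by simp at h
  | c :: L, 0, h => by
    simp only [rowOf, Nat.testBit_zero, List.getElem_cons_zero]
    cases s c <;> simp
  | c :: L, j + 1, h => by
    have h2 : (s c).toNat ≤ 1 := Bool.toNat_le _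
    simp only [rowOf, Nat.testBit_succ, List.getElem_cons_succ]
    rw [← rowOf_testBit s L j (by simpa using h)]
    congr 1
    omega

/-- The basis vectors of the image of `sumLin r`. -/
noncomputable def bas {α β : Type} (r : α → β → Prop) (a : α) : β → ZMod 2 :=
  fun b => if r a b then 1 else 0

theorem sumLin_eq {α β : Type} [Fintype α] (r : α → β → Prop) :
    sumLin r = Fintype.linearCombination (ZMod 2) (bas r) := by
  apply LinearMap.ext
  intro f
  funext b
  simp only [sumLin, LinearMap.coe_mk, AddHom.coe_mk, Fintype.linearCombination_apply,
    Finset.sum_apply, Pi.smul_apply, bas, smul_eq_mul, mul_ite, mul_one, mul_zero]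

/-- An encoding of a type by the elements of a list. -/
structure Enc {α : Type} (e : α → ℕ × ℕ) (L : List (ℕ × ℕ)) : Prop where
  inj : Function.Injective e
  nodup : L.Nodup
  mem : ∀ x, x ∈ L ↔ ∃ a, e a = x

theorem Enc.perm {α : Type} [Fintype α] {e : α → ℕ × ℕ} {L : List (ℕ × ℕ)} (h : Enc e L) :
    L.Perm ((Finset.univ : Finset α).toList.map e) := by
  rw [List.perm_ext_iff_of_nodup h.nodup ((Finset.nodup_toList _).map h.inj)]
  intro x
  rw [h.mem]
  simp

theorem Enc.card {α : Type} [Fintype α] {e : α → ℕ × ℕ} {L : List (ℕ × ℕ)} (h : Enc e L) :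
    Fintype.card α = L.length := by
  rw [h.perm.length_eq]; simp

theorem Enc.sum {α : Type} [Fintype α] {e : α → ℕ × ℕ} {L : List (ℕ × ℕ)} (h : Enc e L)
    {M : Type} [AddCommMonoid M] (F : ℕ × ℕ → M) : (L.map F).sum = ∑ a : α, F (e a) := by
  rw [(h.perm.map F).sum_eq, List.map_map, Finset.sum_map_toList]
  rfl

theorem bas_eq {β : Type} {eb : β → ℕ × ℕ} {B : List (ℕ × ℕ)} (hB : Enc eb B)
    {α : Type} (r : α → β → Prop) (ea : α → ℕ × ℕ) (s : ℕ × ℕ → ℕ × ℕ → Bool)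
    (hs : ∀ a b, r a b ↔ s (ea a) (eb b) = true) (a : α) :
    bas r a = bv (fun b => B.idxOf (eb b)) (rowOf (s (ea a)) B) := by
  funext b
  have hlt : B.idxOf (eb b) < B.length := List.idxOf_lt_length_iff.mpr ((hB.mem _).mpr ⟨b, rfl⟩)
  simp only [bas, bv, rowOf_testBit _ _ _ hlt, List.getElem_idxOf, hs]
  cases s (ea a) (eb b) <;> simp

theorem finrank_range {α β : Type} [Fintype α] [Fintype β] {ea : α → ℕ × ℕ} {eb : β → ℕ × ℕ}
    {A B : List (ℕ × ℕ)} (hA : Enc ea A) (hB : Enc eb B) (r : α → β → Prop)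
    (s : ℕ × ℕ → ℕ × ℕ → Bool) (hs : ∀ a b, r a b ↔ s (ea a) (eb b) = true) :
    Module.finrank (ZMod 2) (LinearMap.range (sumLin r)) =
      rk A.length (A.map fun c => rowOf (s c) B) := by
  rw [sumLin_eq, Fintype.range_linearCombination]
  rw [← rk_spec (fun b => B.idxOf (eb b)) B.length _ A.length _ (by simp)]
  · have hset : Set.range (bas r) = Set.image (bv fun b => B.idxOf (eb b))
        {w | w ∈ A.map fun c => rowOf (s c) B} := ?_
    · rw [hset]
    ext x
    constructor
    · rintro ⟨a, rfl⟩
      exact ⟨rowOf (s (ea a)) B, List.mem_map_of_mem (f := fun c => rowOf (s c) B) ((hA.mem _).mpr ⟨a, rfl⟩),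
        (bas_eq hB r ea s hs a).symm⟩
    · rintro ⟨w, hw, rfl⟩
      obtain ⟨c, hc, rfl⟩ := List.mem_map.mp hw
      obtain ⟨a, rfl⟩ := (hA.mem _).mp hc
      exact ⟨a, bas_eq hB r ea s hs a⟩
  · intro w hw
    obtain ⟨c, hc, rfl⟩ := List.mem_map.mp hw
    exact rowOf_lt _ _
  · intro j hj
    obtain ⟨b, hb⟩ := (hB.mem B[j]).mp (List.getElem_mem hj)
    refine ⟨b, ?_⟩
    rw [hb]
    exact hB.nodup.idxOf_getElem j hj

theorem bv_dd {γ : Type} (idx : γ → ℕ) (p : ℕ) (C : List (ℕ × ℕ)) (c : ℕ × ℕ) :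
    ∀ B : List (ℕ × ℕ), bv idx (dd p B C c) =
      (B.map fun b => cond (cstep p c b) (bv idx (rowOf (cstep p b) C)) 0).sum
  | [] => by simp [dd, bv_zero]
  | b :: B => by
    have ih := bv_dd idx p C c B
    simp only [List.map_cons, List.sum_cons, ← ih]
    simp only [dd, List.foldr_cons]
    cases cstep p c b
    · simp
    · simp only [cond_true, bv_xor]

theorem coh_of_chk {α β γ : Type} [Fintype α] [Fintype β] [Fintype γ]
    {ea : α → ℕ × ℕ} {eb : β → ℕ × ℕ} {ec : γ → ℕ × ℕ}
    {A B C : List (ℕ × ℕ)} (hA : Enc ea A) (hB : Enc eb B) (hC : Enc ec C)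
    (r : α → β → Prop) (r' : β → γ → Prop) (p x : ℕ)
    (hr : ∀ a b, r a b ↔ cstep p (ea a) (eb b) = true)
    (hr' : ∀ a b, r' a b ↔ cstep p (eb a) (ec b) = true)
    (h : chk3 p x A B C = true) : cohDim (sumLin r) (sumLin r') = x := by
  simp only [chk3, Bool.and_eq_true, List.all_eq_true, Nat.beq_eq] at h
  obtain ⟨h1, h2⟩ := h
  have hle : LinearMap.range (sumLin r) ≤ LinearMap.ker (sumLin r') := by
    rw [sumLin_eq r, Fintype.range_linearCombination, Submodule.span_le]
    rintro _ ⟨a, rfl⟩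
    rw [SetLike.mem_coe, LinearMap.mem_ker, sumLin_eq, Fintype.linearCombination_apply]
    have := bv_dd (fun c => C.idxOf (ec c)) p C (ea a) B
    rw [h1 _ ((hA.mem _).mpr ⟨a, rfl⟩), bv_zero, hB.sum] at this
    rw [this]
    refine Finset.sum_congr rfl fun b _ => ?_
    rw [bas_eq hC r' eb (cstep p) hr' b]
    simp only [bas, hr]
    cases cstep p (ea a) (eb b) <;> simp
  have h3 := cohDim_add (sumLin r) (sumLin r') hle
  rw [finrank_range hA hB r _ hr, finrank_range hB hC r' _ hr', Module.finrank_fintype_fun_eq_card,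
    hB.card] at h3
  omega

/-! ### Encoding of configurations -/

theorem lo_eq (i : ℕ) : lo i = i := rfl

theorem hi_eq (i : ℕ) : hi i = if i = 0 then 3 else i + 1 := by
  cases i <;> rfl

theorem lt_hi (i : ℕ) : i < hi i := by
  rw [hi_eq]; split <;> omega

theorem hi_lt {p i : ℕ} (hp : 3 ≤ p) (h : i < p) : hi i < p + 1 := by
  rw [hi_eq]; split <;> omega

section enc

variable {p : ℕ} (hp : 3 ≤ p)

/-- The `i`-th edge. -/
def ed (hp : 3 ≤ p) (i : Fin p) : Sym2 (Fin (p + 1)) :=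
  s(⟨lo i, by rw [lo_eq]; omega⟩, ⟨hi i, hi_lt hp i.2⟩)

theorem mem_ed (i : Fin p) (v : Fin (p + 1)) : v ∈ ed hp i ↔ v.1 = lo i ∨ v.1 = hi i := by
  simp [ed, Fin.ext_iff]

theorem ed_inj : Function.Injective (ed hp) := by
  intro i j h
  have h1 := lt_hi i
  have h2 := lt_hi j
  simp only [ed, Sym2.eq_iff, Fin.mk.injEq, lo_eq] at h
  apply Fin.ext
  omega

theorem edge_iff (e : Sym2 (Fin (p + 1))) : e ∈ (dynkinE (p + 1)).edgeSet ↔ ∃ i, ed hp i = e := by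
  induction e using Sym2.ind with
  | _ u v =>
    simp only [SimpleGraph.mem_edgeSet, dynkinE, SimpleGraph.fromRel_adj, ed, Sym2.eq_iff, lo_eq,
      Fin.ext_iff, ne_eq]
    constructor
    · rintro ⟨_, (h | h) | (h | h)⟩
      · exact ⟨⟨0, by omega⟩, by simp [hi_eq]; omega⟩
      · have h3 := hi_eq u.1
        rw [if_neg (by omega)] at h3
        exact ⟨⟨u.1, by omega⟩, Or.inl ⟨rfl, h3.trans h.2.symm⟩⟩
      · exact ⟨⟨0, by omega⟩, by simp [hi_eq]; omega⟩
      · have h3 := hi_eq v.1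
        rw [if_neg (by omega)] at h3
        exact ⟨⟨v.1, by omega⟩, Or.inr ⟨rfl, h3.trans h.2.symm⟩⟩
    · rintro ⟨i, h⟩
      have := lt_hi i
      have h3 := hi_eq i
      split at h3 <;> omega

/-- The mask of red edges. -/
noncomputable def encA (C : Config (dynkinE (p + 1))) : ℕ :=
  Nat.ofBits fun i : Fin p => decide (ed hp i ∈ C.red)

/-- The mask of minuses. -/
noncomputable def encB (C : Config (dynkinE (p + 1))) : ℕ :=
  Nat.ofBits fun v : Fin (p + 1) => decide (C.sign v = some false)

/-- The code of a configuration. -/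
noncomputable def enc (C : Config (dynkinE (p + 1))) : ℕ × ℕ := (encA hp C, encB C)

theorem ta (C : Config (dynkinE (p + 1))) (i : Fin p) :
    (encA hp C).testBit i = true ↔ ed hp i ∈ C.red := by
  simp [encA]

theorem tb (C : Config (dynkinE (p + 1))) (v : Fin (p + 1)) :
    (encB C).testBit v = true ↔ C.sign v = some false := by
  rw [encB, Nat.testBit_ofBits_lt _ _ v.2, decide_eq_true_iff]

theorem encA_lt (C : Config (dynkinE (p + 1))) : encA hp C < 2 ^ p := Nat.ofBits_lt_two_pow _

theorem encB_lt (C : Config (dynkinE (p + 1))) : encB C < 2 ^ (p + 1) := Nat.ofBits_lt_two_pow _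

theorem eq_of_bits {n x y : ℕ} (hx : x < 2 ^ n) (hy : y < 2 ^ n)
    (h : ∀ i : Fin n, x.testBit i = true ↔ y.testBit i = true) : x = y := by
  apply Nat.eq_of_testBit_eq
  intro i
  by_cases hi : i < n
  · have := h ⟨i, hi⟩
    exact Bool.eq_iff_iff.mpr this
  · have h2 : 2 ^ n ≤ 2 ^ i := Nat.pow_le_pow_right (by norm_num) (by omega)
    rw [Nat.testBit_lt_two_pow (lt_of_lt_of_le hx h2),
      Nat.testBit_lt_two_pow (lt_of_lt_of_le hy h2)]

theorem pop_eq (n x : ℕ) :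
    pop n x = (Finset.univ.filter fun i : Fin n => x.testBit i = true).card := by
  have h : (Finset.univ.filter fun i : Fin n => x.testBit i = true).map Fin.valEmbedding =
      (Finset.range n).filter fun i => x.testBit i = true := by
    ext j
    simp only [Finset.mem_map, Finset.mem_filter, Finset.mem_univ, true_and, Finset.mem_range,
      Fin.valEmbedding_apply]
    constructor
    · rintro ⟨i, hi, rfl⟩
      exact ⟨i.2, hi⟩
    · rintro ⟨h1, h2⟩
      exact ⟨⟨j, h1⟩, h2, rfl⟩
  rw [← Finset.card_map Fin.valEmbedding, h, pop]
  rw [← List.toFinset_range, ← List.toFinset_filter, List.toFinset_card_of_nodup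
    (List.nodup_range.filter _), List.countP_eq_length_filter]

theorem Qg_eq (C : Config (dynkinE (p + 1))) : Qg C = pop (p + 1) (encB C) := by
  rw [pop_eq, Qg]
  congr 1
  ext v
  simp [tb]

theorem red_eq (C : Config (dynkinE (p + 1))) :
    C.red = (Finset.univ.filter fun i : Fin p => ed hp i ∈ C.red).map ⟨ed hp, ed_inj hp⟩ := by
  ext e
  simp only [Finset.mem_map, Finset.mem_filter, Finset.mem_univ, true_and,
    Function.Embedding.coeFn_mk]
  constructor
  · intro he
    obtain ⟨i, rfl⟩ := (edge_iff hp e).mp (C.matching.1 e he)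
    exact ⟨i, he, rfl⟩
  · rintro ⟨i, hi, rfl⟩
    exact hi

theorem card_red (C : Config (dynkinE (p + 1))) : C.red.card = pop p (encA hp C) := by
  rw [pop_eq, red_eq hp C, Finset.card_map]
  congr 1
  ext v
  simp [ta]

theorem Eg_eq (C : Config (dynkinE (p + 1))) :
    Eg C = pop (p + 1) (encB C) + pop p (encA hp C) := by
  rw [Eg, Qg_eq, card_red hp]

theorem config_ext (C C' : Config (dynkinE (p + 1))) (h1 : C.red = C'.red)
    (h2 : C.sign = C'.sign) : C = C' := by
  cases C; cases C'
  simp only at h1 h2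
  subst h1; subst h2; rfl

theorem red_eq_of (C C' : Config (dynkinE (p + 1)))
    (h : ∀ i, ed hp i ∈ C.red ↔ ed hp i ∈ C'.red) : C.red = C'.red := by
  rw [red_eq hp C, red_eq hp C']
  simp only [h]

theorem sign_eq_of (C C' : Config (dynkinE (p + 1))) (v : Fin (p + 1))
    (h1 : (∃ e ∈ C.red, v ∈ e) ↔ (∃ e ∈ C'.red, v ∈ e))
    (h2 : C.sign v = some false ↔ C'.sign v = some false) : C.sign v = C'.sign v := by
  rw [← C.sign_none, ← C'.sign_none] at h1
  rcases hc : C.sign v with _ | _ | _ <;> rcases hc' : C'.sign v with _ | _ | _ <;> simp_all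

theorem enc_inj : Function.Injective (enc hp) := by
  intro C C' h
  simp only [enc, Prod.mk.injEq] at h
  obtain ⟨hA, hB⟩ := h
  have hr : C.red = C'.red := red_eq_of hp C C' fun i => by rw [← ta, ← ta, hA]
  refine config_ext C C' hr (funext fun v => sign_eq_of C C' v (by rw [hr]) ?_)
  rw [← tb, ← tb, hB]

theorem adjOK_iff (a : ℕ) : adjOK p a = true ↔ ∀ i j : Fin p, i ≠ j → a.testBit i = true →
    a.testBit j = true → ∀ v, v ∈ ed hp i → v ∉ ed hp j := by
  simp only [adjOK, List.all_eq_true, List.mem_range, Bool.or_eq_true, Bool.not_eq_true',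
    Nat.beq_eq, Bool.or_eq_false_iff, mem_ed]
  constructor
  · intro h i j hij hi hj v hv
    rcases h i i.2 with h | h
    · simp [hi] at h
    rcases h j j.2 with (h | h) | h
    · exact absurd (Fin.ext h) hij
    · simp [hj] at h
    · simp only [← Bool.not_eq_true, Nat.beq_eq] at h
      omega
  · intro h i hip
    rcases hti : a.testBit i with _ | _
    · left; rfl
    right
    intro j hj
    by_cases hij : i = j
    · left; left; exact hij
    rcases htj : a.testBit j with _ | _
    · left; right; rfl
    right
    have := h ⟨i, hip⟩ ⟨j, hj⟩ (by simpa [Fin.ext_iff] using hij) hti htj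
    have h1 := this ⟨lo i, by rw [lo_eq]; omega⟩ (Or.inl rfl)
    have h2 := this ⟨hi i, hi_lt hp hip⟩ (Or.inr rfl)
    simp only [not_or] at h1 h2
    simp only [← Bool.not_eq_true, Nat.beq_eq]
    tauto

theorem okAB_iff (a b : ℕ) : okAB p a b = true ↔ ∀ i : Fin p, a.testBit i = true →
    ∀ v : Fin (p + 1), v ∈ ed hp i → ¬ b.testBit v = true := by
  simp only [okAB, List.all_eq_true, List.mem_range, Bool.or_eq_true, Bool.not_eq_true',
    Bool.and_eq_true, mem_ed]
  constructor
  · intro h i hi v hv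
    rcases h i i.2 with h | h
    · simp [hi] at h
    rcases hv with hv | hv <;> simp [hv, h.1, h.2]
  · intro h i hip
    rcases hti : a.testBit i with _ | _
    · left; rfl
    right
    have := h ⟨i, hip⟩ hti
    have h1 := this ⟨lo i, by rw [lo_eq]; omega⟩ (Or.inl rfl)
    have h2 := this ⟨hi i, hi_lt hp hip⟩ (Or.inr rfl)
    exact ⟨Bool.not_eq_true _ ▸ h1, Bool.not_eq_true _ ▸ h2⟩

theorem mem_codes (n q a b : ℕ) : (a, b) ∈ codes n q ↔
    a < 2 ^ q ∧ adjOK q a = true ∧ b < 2 ^ n ∧ okAB q a b = true := by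
  simp only [codes, List.mem_flatMap, List.mem_filter, List.mem_range, List.mem_map,
    Prod.mk.injEq]
  constructor
  · rintro ⟨a', ⟨h1, h2⟩, b', ⟨h3, h4⟩, rfl, rfl⟩
    exact ⟨h1, h2, h3, h4⟩
  · rintro ⟨h1, h2, h3, h4⟩
    exact ⟨a, ⟨h1, h2⟩, b, ⟨h3, h4⟩, rfl, rfl⟩

theorem nodup_codes (n q : ℕ) : (codes n q).Nodup := by
  unfold codes
  rw [List.nodup_flatMap]
  constructor
  · intro a _
    refine (List.nodup_range.filter _).map ?_
    intro b b' h
    simpa using h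
  · refine List.Pairwise.imp ?_ (List.nodup_range.filter (adjOK q))
    intro a a' haa x hx hx'
    simp only [List.mem_map] at hx hx'
    obtain ⟨b, _, rfl⟩ := hx
    obtain ⟨b', _, h⟩ := hx'
    simp only [Prod.mk.injEq] at h
    exact haa h.1.symm

theorem enc_mem (C : Config (dynkinE (p + 1))) : enc hp C ∈ codes (p + 1) p := by
  rw [enc, mem_codes]
  refine ⟨encA_lt hp C, (adjOK_iff hp _).mpr ?_, encB_lt C, (okAB_iff hp _ _).mpr ?_⟩
  · intro i j hij hi hj v hv
    rw [ta] at hi hj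
    exact C.matching.2 _ hi _ hj (fun h => hij (ed_inj hp h)) v hv
  · intro i hi v hv
    rw [ta] at hi
    rw [tb, (C.sign_none v).mpr ⟨_, hi, hv⟩]
    simp

theorem enc_surj (x : ℕ × ℕ) (hx : x ∈ codes (p + 1) p) : ∃ C, enc hp C = x := by
  obtain ⟨a, b⟩ := x
  rw [mem_codes, adjOK_iff hp, okAB_iff hp] at hx
  obtain ⟨ha, hadj, hb, hab⟩ := hx
  have hmem : ∀ e, e ∈ (Finset.univ.filter fun i : Fin p => a.testBit i = true).map
      ⟨ed hp, ed_inj hp⟩ ↔ ∃ i : Fin p, a.testBit i = true ∧ ed hp i = e := by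
    intro e; simp
  let C : Config (dynkinE (p + 1)) :=
    { red := (Finset.univ.filter fun i : Fin p => a.testBit i = true).map ⟨ed hp, ed_inj hp⟩
      matching := by
        constructor
        · intro e he
          obtain ⟨i, _, rfl⟩ := (hmem e).mp he
          exact (edge_iff hp _).mpr ⟨i, rfl⟩
        · intro e he f hf hef
          obtain ⟨i, hi, rfl⟩ := (hmem e).mp he
          obtain ⟨j, hj, rfl⟩ := (hmem f).mp hf
          exact hadj i j (fun h => hef (by rw [h])) hi hj
      sign := fun v => if ∃ i : Fin p, a.testBit i = true ∧ v ∈ ed hp i then none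
        else some (!b.testBit v)
      sign_none := by
        intro v
        simp only [hmem]
        constructor
        · intro h
          by_contra hc
          rw [if_neg] at h
          · simp at h
          · rintro ⟨i, hi, hv⟩
            exact hc ⟨_, ⟨i, hi, rfl⟩, hv⟩
        · rintro ⟨_, ⟨i, hi, rfl⟩, hv⟩
          exact if_pos ⟨i, hi, hv⟩ }
  refine ⟨C, ?_⟩
  rw [enc, Prod.mk.injEq]
  constructor
  · refine eq_of_bits (encA_lt hp C) ha fun i => ?_
    rw [ta, hmem]
    constructor
    · rintro ⟨j, hj, h⟩
      rwa [← ed_inj hp h]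
    · intro h
      exact ⟨i, h, rfl⟩
  · refine eq_of_bits (encB_lt C) hb fun v => ?_
    rw [tb]
    change (if ∃ i : Fin p, a.testBit i = true ∧ v ∈ ed hp i then none
        else some (!b.testBit v)) = some false ↔ _
    split
    · rename_i h
      obtain ⟨i, hi, hv⟩ := h
      have := hab i hi v hv
      simp [this]
    · simp

theorem testBit_xor_pow (x i j : ℕ) : (x ^^^ 2 ^ i).testBit j = (x.testBit j ^^ decide (i = j)) := by
  rw [Nat.testBit_xor, Nat.testBit_two_pow]

theorem cstep_iff (hp : 3 ≤ p) (c c' : ℕ × ℕ) (h : c ∈ codes (p + 1) p) : cstep p c c' = true ↔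
    ∃ i : Fin p, c.1.testBit i = true ∧ c'.1 = c.1 ^^^ 2 ^ i.1 ∧
      (c'.2 = c.2 ^^^ 2 ^ lo i ∨ c'.2 = c.2 ^^^ 2 ^ hi i) := by
  obtain ⟨a, b⟩ := c
  obtain ⟨a', b'⟩ := c'
  rw [mem_codes] at h
  simp only [cstep, Bool.and_eq_true, Nat.beq_eq, List.any_eq_true, List.mem_range,
    Bool.or_eq_true]
  constructor
  · rintro ⟨_, _, i, hi, h1, h2, h3⟩
    exact ⟨⟨i, hi⟩, h1, h2, h3⟩
  · rintro ⟨i, h1, h2, h3⟩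
    refine ⟨?_, ?_, i, i.2, h1, h2, h3⟩
    · change a &&& a' = a'
      apply Nat.eq_of_testBit_eq
      intro j
      rw [h2, Nat.testBit_and, testBit_xor_pow]
      by_cases hj : i.1 = j
      · subst hj; simp [h1]
      · simp [hj]
    · have hl := (okAB_iff hp a b).mp h.2.2.2 i h1 ⟨lo i, by rw [lo_eq]; omega⟩
        ((mem_ed hp _ _).mpr (Or.inl rfl))
      have hh := (okAB_iff hp a b).mp h.2.2.2 i h1 ⟨hi i, hi_lt hp i.2⟩
        ((mem_ed hp _ _).mpr (Or.inr rfl))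
      simp only [Bool.not_eq_true] at hl hh
      change b &&& b' = b
      apply Nat.eq_of_testBit_eq
      intro j
      rw [Nat.testBit_and]
      rcases h3 with h3 | h3 <;> rw [h3, testBit_xor_pow]
      · by_cases hj : lo i = j
        · subst hj; simp [hl]
        · simp [hj]
      · by_cases hj : hi i = j
        · subst hj; simp [hh]
        · simp [hj]

theorem DStep_def {V : Type} [Fintype V] {G : SimpleGraph V} (C C' : Config G) :
    DStep C C' ↔ ∃ e ∈ C.red, (∀ f, f ∈ C'.red ↔ f ≠ e ∧ f ∈ C.red) ∧
      (∀ x : V, x ∉ e → C'.sign x = C.sign x) ∧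
      ∃ u v : V, e = s(u, v) ∧ C'.sign u = some true ∧ C'.sign v = some false := by
  unfold DStep
  simp only [Finset.ext_iff, Finset.mem_erase]

theorem DStep_iff (C C' : Config (dynkinE (p + 1))) :
    DStep C C' ↔ cstep p (enc hp C) (enc hp C') = true := by
  rw [cstep_iff hp _ _ (enc_mem hp C), DStep_def]
  simp only [enc]
  have hltA : ∀ i : Fin p, encA hp C ^^^ 2 ^ i.1 < 2 ^ p := fun i =>
    Nat.xor_lt_two_pow (encA_lt hp C) (Nat.pow_lt_pow_right (by norm_num) i.2)
  have hltB : ∀ i, i < p + 1 → encB C ^^^ 2 ^ i < 2 ^ (p + 1) := fun i hi =>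
    Nat.xor_lt_two_pow (encB_lt C) (Nat.pow_lt_pow_right (by norm_num) hi)
  constructor
  · rintro ⟨e, he, hred, hout, u, v, heuv, hu, hv⟩
    obtain ⟨i, rfl⟩ := (edge_iff hp e).mp (C.matching.1 e he)
    refine ⟨i, (ta hp C i).mpr he, ?_, ?_⟩
    · refine eq_of_bits (encA_lt hp C') (hltA i) fun j => ?_
      rw [ta, hred, testBit_xor_pow]
      by_cases hij : i = j
      · subst hij
        simp [(ta hp C i).mpr he]
      · have h1 : ed hp j ≠ ed hp i := fun h => hij (ed_inj hp h).symm
        have h2 : i.1 ≠ j.1 := fun h => hij (Fin.ext h)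
        simp [h1, h2, ta]
    · have hCu : C.sign u = none := (C.sign_none u).mpr ⟨_, he, by rw [heuv]; simp⟩
      have hCv : C.sign v = none := (C.sign_none v).mpr ⟨_, he, by rw [heuv]; simp⟩
      have key : encB C' = encB C ^^^ 2 ^ v.1 := by
        refine eq_of_bits (encB_lt C') (hltB _ v.2) fun x => ?_
        rw [tb, testBit_xor_pow]
        by_cases hxv : v = x
        · subst hxv
          have : (encB C).testBit v = false := by
            rw [← Bool.not_eq_true, tb, hCv]; simp
          simp [hv, this]
        · have h2 : v.1 ≠ x.1 := fun h => hxv (Fin.ext h)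
          simp only [h2, decide_false, Bool.xor_false, tb]
          by_cases hxu : x = u
          · subst hxu
            simp [hu, hCu]
          · rw [hout x]
            rw [heuv]
            simp only [Sym2.mem_iff, not_or]
            exact ⟨hxu, fun h => hxv h.symm⟩
      have hvm : v ∈ ed hp i := by rw [heuv]; simp
      rcases (mem_ed hp i v).mp hvm with h | h
      · left; rw [key, h]
      · right; rw [key, h]
  · rintro ⟨i, hti, hA, hB⟩
    have hie := (ta hp C i).mp hti
    have hmem : ∀ j, ed hp j ∈ C'.red ↔ j ≠ i ∧ ed hp j ∈ C.red := by
      intro j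
      rw [← ta, hA, testBit_xor_pow, ← ta hp C j]
      by_cases hij : i = j
      · subst hij
        simp [hti]
      · have h2 : i.1 ≠ j.1 := fun h => hij (Fin.ext h)
        simp [h2, Ne.symm hij]
    have hred : ∀ f, f ∈ C'.red ↔ f ≠ ed hp i ∧ f ∈ C.red := by
      intro e
      constructor
      · intro he
        obtain ⟨j, rfl⟩ := (edge_iff hp e).mp (C'.matching.1 e he)
        obtain ⟨h1, h2⟩ := (hmem j).mp he
        exact ⟨fun h => h1 (ed_inj hp h), h2⟩
      · rintro ⟨h1, he⟩
        obtain ⟨j, rfl⟩ := (edge_iff hp e).mp (C.matching.1 e he)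
        exact (hmem j).mpr ⟨fun h => h1 (by rw [h]), he⟩
    have hbit : ∀ w : Fin (p + 1), w ∈ ed hp i → (encB C).testBit w = false := by
      intro w hw
      rw [← Bool.not_eq_true, tb, (C.sign_none w).mpr ⟨_, hie, hw⟩]
      simp
    have hsome : ∀ w : Fin (p + 1), w ∈ ed hp i → C'.sign w ≠ none := by
      intro w hw h
      obtain ⟨f, hf, hwf⟩ := (C'.sign_none w).mp h
      rw [hred] at hf
      exact C.matching.2 _ hf.2 _ hie hf.1 w hwf hw
    have main : ∀ u v : Fin (p + 1), ed hp i = s(u, v) → u ≠ v → encB C' = encB C ^^^ 2 ^ v.1 →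
        DStep C C' := by
      intro u v huv hne hBv
      have hsf : ∀ x : Fin (p + 1), C'.sign x = some false ↔ x = v ∨ (x ≠ v ∧ C.sign x = some false) := by
        intro x
        rw [← tb, hBv, testBit_xor_pow, ← tb C x]
        by_cases hxv : v = x
        · subst hxv
          simp [hbit v (by rw [huv]; simp)]
        · have h2 : v.1 ≠ x.1 := fun h => hxv (Fin.ext h)
          simp [h2, Ne.symm hxv]
      rw [DStep_def]
      refine ⟨ed hp i, hie, hred, ?_, u, v, huv, ?_, ?_⟩
      · intro x hx
        refine sign_eq_of C' C x ?_ ?_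
        · constructor
          · rintro ⟨f, hf, hxf⟩
            rw [hred] at hf
            exact ⟨f, hf.2, hxf⟩
          · rintro ⟨f, hf, hxf⟩
            refine ⟨f, ?_, hxf⟩
            rw [hred]
            exact ⟨fun h => hx (h ▸ hxf), hf⟩
        · rw [hsf]
          have : x ≠ v := by
            rintro rfl
            exact hx (by rw [huv]; simp)
          simp [this]
      · have hu1 := hsome u (by rw [huv]; simp)
        have hu2 : C'.sign u ≠ some false := by
          rw [Ne, hsf]
          have : C.sign u = none := (C.sign_none u).mpr ⟨_, hie, by rw [huv]; simp⟩
          simp [hne, this]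
        rcases hc : C'.sign u with _ | _ | _ <;> simp_all
      · rw [hsf]; left; rfl
    have hlt := lt_hi i
    rw [← DStep_def]
    rcases hB with hB | hB
    · refine main ⟨hi i, hi_lt hp i.2⟩ ⟨lo i, by rw [lo_eq]; omega⟩ (by rw [ed, Sym2.eq_swap]) ?_ hB
      simp only [ne_eq, Fin.mk.injEq, lo_eq]; omega
    · refine main ⟨lo i, by rw [lo_eq]; omega⟩ ⟨hi i, hi_lt hp i.2⟩ rfl ?_ hB
      simp only [ne_eq, Fin.mk.injEq, lo_eq]; omega

theorem enc_part (k m : ℤ) (s q m' : ℕ) (hk : k = (q : ℤ) - s) (hm : m = m') :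
    Enc (fun C : {C : Config (dynkinE (p + 1)) // (Qg C : ℤ) = k ∧ (Eg C : ℤ) = m} => enc hp C.1)
      (part (p + 1) p (codes (p + 1) p) s q m') where
  inj := fun C C' h => Subtype.ext (enc_inj hp h)
  nodup := ((nodup_codes _ _).filter _).filter _
  mem := by
    intro x
    simp only [part, List.mem_filter, Nat.beq_eq, Subtype.exists]
    constructor
    · rintro ⟨⟨h1, h2⟩, h3⟩
      obtain ⟨C, rfl⟩ := enc_surj hp x h1
      refine ⟨C, ?_, rfl⟩
      rw [Eg_eq hp, Qg_eq]
      simp only [enc] at h2 h3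
      omega
    · rintro ⟨C, h, rfl⟩
      rw [Eg_eq hp, Qg_eq] at h
      refine ⟨⟨enc_mem hp C, ?_⟩, ?_⟩ <;> simp only [enc] <;> omega

theorem SHdim_of_chk (hp : 3 ≤ p) (hd : chkDeg (p + 1) p = true) (hc : chkAll (p + 1) p = true) (k m : ℤ) :
    SHdim (dynkinE (p + 1)) k m =
      (if k = m ∧ 0 ≤ k ∧ k ≤ ((p + 1 : ℕ) : ℤ) then 1 else 0) +
        (if m = k + 1 ∧ 1 ≤ k ∧ k ≤ ((p + 1 : ℕ) : ℤ) - 4 then 1 else 0) +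
          (if m = k + 1 ∧ 2 ≤ k ∧ k ≤ ((p + 1 : ℕ) : ℤ) - 3 then 1 else 0) := by
  by_cases hr : 0 ≤ k ∧ k ≤ m ∧ m ≤ ((p + 1 : ℕ) : ℤ)
  · obtain ⟨h0, h1, h2⟩ := hr
    obtain ⟨q, rfl⟩ := Int.eq_ofNat_of_zero_le h0
    obtain ⟨m, rfl⟩ := Int.eq_ofNat_of_zero_le (h0.trans h1)
    simp only [chkAll, List.all_eq_true, List.mem_range] at hc
    have h3 := hc m (by omega) q (by omega)
    unfold SHdim Dgr
    rw [coh_of_chk (enc_part hp _ _ 1 q m (by simp) rfl) (enc_part hp _ _ 0 q m (by simp) rfl)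
      (enc_part hp _ _ 0 (q + 1) m (by simp) rfl) _ _ p _ (fun a b => DStep_iff hp _ _)
      (fun a b => DStep_iff hp _ _) h3]
    have hb : ∀ (P : Prop) [Decidable P] (b : Bool), (b = true ↔ P) → b.toNat = if P then 1 else 0 := by
      intro P _ b hP
      by_cases h : P
      · rw [if_pos h, hP.mpr h]; rfl
      · rw [if_neg h]
        cases b
        · rfl
        · exact absurd (hP.mp rfl) h
    unfold expect
    congr 1
    · congr 1
      · apply hb
        simp only [Bool.and_eq_true, Nat.beq_eq, Nat.ble_eq]
        omega
      · apply hb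
        simp only [Bool.and_eq_true, Nat.beq_eq, Nat.ble_eq]
        omega
    · apply hb
      simp only [Bool.and_eq_true, Nat.beq_eq, Nat.ble_eq]
      omega
  · have hemp : IsEmpty {C : Config (dynkinE (p + 1)) // (Qg C : ℤ) = k ∧ (Eg C : ℤ) = m} := by
      constructor
      rintro ⟨C, h1, h2⟩
      apply hr
      simp only [chkDeg, List.all_eq_true, Nat.ble_eq] at hd
      have := hd _ (enc_mem hp C)
      simp only [enc] at this
      rw [← Eg_eq hp] at this
      have h3 : Qg C ≤ Eg C := Nat.le_add_right _ _
      omega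
    have : Subsingleton (SC (dynkinE (p + 1)) k m) := inferInstance
    have hz : SHdim (dynkinE (p + 1)) k m = 0 := by
      unfold SHdim cohDim
      exact Module.finrank_zero_of_subsingleton
    rw [hz, if_neg (by omega), if_neg (by omega), if_neg (by omega)]

end enc

section
theorem chkDeg6 : chkDeg 6 5 = true := by decide +kernel
theorem chkDeg7 : chkDeg 7 6 = true := by decide +kernel
theorem chkDeg8 : chkDeg 8 7 = true := by decide +kernel
theorem chkAll6 : chkAll 6 5 = true := by decide +kernel
theorem chkAll7 : chkAll 7 6 = true := by decide +kernel
theorem chkAll8 : chkAll 8 7 = true := by decide +kernel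
end

/-- the Seifert cohomology of the Dynkin diagrams `E₆`, `E₇`, `E₈`:
`dim SH^k(E_n,m) = 1` if `k = m` and `0 ≤ k ≤ n`; for `m = k + 1` it is
`(1 if 1 ≤ k ≤ n - 4) + (1 if 2 ≤ k ≤ n - 3)`; and `0` otherwise. -/
theorem SHdim_dynkinE (n : ℕ) (hn : n = 6 ∨ n = 7 ∨ n = 8) (k m : ℤ) :
    SHdim (dynkinE n) k m =
      (if k = m ∧ 0 ≤ k ∧ k ≤ (n : ℤ) then 1 else 0) +
        (if m = k + 1 ∧ 1 ≤ k ∧ k ≤ (n : ℤ) - 4 then 1 else 0) +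
          (if m = k + 1 ∧ 2 ≤ k ∧ k ≤ (n : ℤ) - 3 then 1 else 0) := by
  rcases hn with rfl | rfl | rfl
  · exact SHdim_of_chk (p := 5) (by norm_num) chkDeg6 chkAll6 k m
  · exact SHdim_of_chk (p := 6) (by norm_num) chkDeg7 chkAll7 k m
  · exact SHdim_of_chk (p := 7) (by norm_num) chkDeg8 chkAll8 k m

end Seifert
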